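/- Let k be a field of characteristic different from 2, and let A = k[u, v]/(u², v²) be the quotient of the commutative polynomial ring in two variables by the ideal generated by u² and v². The set of 3×3 matrices of the form [[a, d, e], [c, b, f], [0, 0, ab + cd]] with a, b, c, d, e, f ∈ k satisfying ad = 0, cb = 0 and a²b² ≠ c²d² is a subgroup of GL₃(k), and the group of k-algebra automorphisms of A is isomorphic, as a group, to this subgroup. -/

import Mathlib

open scoped DualNumber

section IteratedDualNumbers

variable {k : Type} [Field k]

/-- The `k`-algebra morphism out of `k[ε][ε]` sending the inner `ε` to `x` and the outer `ε`
to `y`, where `x` and `y` square to zero. -/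
noncomputable def DualNumber.liftPair {B : Type} [CommRing B] [Algebra k B] (x y : B)
    (hx : x * x = 0) (hy : y * y = 0) : k[ε][ε] →ₐ[k] B :=
  DualNumber.lift ⟨(DualNumber.lift ⟨(Algebra.ofId k B, x), hx, fun _ => Commute.all _ _⟩, y),
    hy, fun _ => Commute.all _ _⟩

theorem DualNumber.liftPair_apply {B : Type} [CommRing B] [Algebra k B] (x y : B)
    (hx : x * x = 0) (hy : y * y = 0) (z : k[ε][ε]) :
    DualNumber.liftPair x y hx hy z =
      algebraMap k B z.fst.fst + z.fst.snd • x + z.snd.fst • y + z.snd.snd • (x * y) := by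
  simp only [DualNumber.liftPair, DualNumber.lift_apply_apply, Algebra.ofId_apply,
    Algebra.smul_def]
  ring

/-- The element `p u + q v + r u v` of `k[ε][ε]`, with `u` the inner and `v` the outer `ε`. -/
def DualNumber.nilp (p q r : k) : k[ε][ε] := ((0, p), (q, r))

theorem DualNumber.pair_ext {R : Type} {x y : R[ε][ε]} (h₁ : x.fst.fst = y.fst.fst)
    (h₂ : x.fst.snd = y.fst.snd) (h₃ : x.snd.fst = y.snd.fst) (h₄ : x.snd.snd = y.snd.snd) :
    x = y :=
  TrivSqZeroExt.ext (TrivSqZeroExt.ext h₁ h₂) (TrivSqZeroExt.ext h₃ h₄)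

@[simp] theorem DualNumber.nilp_fst_fst (p q r : k) : (nilp p q r).fst.fst = 0 := rfl
@[simp] theorem DualNumber.nilp_fst_snd (p q r : k) : (nilp p q r).fst.snd = p := rfl
@[simp] theorem DualNumber.nilp_snd_fst (p q r : k) : (nilp p q r).snd.fst = q := rfl
@[simp] theorem DualNumber.nilp_snd_snd (p q r : k) : (nilp p q r).snd.snd = r := rfl

theorem DualNumber.nilp_mul_nilp (p q r p' q' r' : k) :
    nilp p q r * nilp p' q' r' = nilp 0 0 (p * q' + q * p') := by
  apply DualNumber.pair_ext <;> simp [mul_comm]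

theorem DualNumber.eq_nilp_of_mul_self {x : k[ε][ε]} (hx : x * x = 0) :
    x = nilp x.fst.snd x.snd.fst x.snd.snd := by
  have h : x.fst.fst = 0 := by
    have := congrArg (fun z : k[ε][ε] => z.fst.fst) hx
    simpa using this
  apply DualNumber.pair_ext <;> simp [h]

/-- The basis `u, v, u v` of the maximal ideal of `k[ε][ε]`. -/
def DualNumber.maxBasis : Fin 3 → k[ε][ε] := ![nilp 1 0 0, nilp 0 1 0, nilp 0 0 1]

theorem DualNumber.maxBasis_mul_self (i : Fin 3) :
    (maxBasis i : k[ε][ε]) * maxBasis i = 0 := by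
  fin_cases i <;> simp [maxBasis, nilp_mul_nilp] <;> rfl

/-- The coordinates of an element of `k[ε][ε]` along `u, v, u v`. -/
def DualNumber.maxCoord (x : k[ε][ε]) : Fin 3 → k := ![x.fst.snd, x.snd.fst, x.snd.snd]

theorem DualNumber.nilp_eq (p q r : k) :
    nilp p q r = p • maxBasis 0 + q • maxBasis 1 + r • maxBasis 2 := by
  apply DualNumber.pair_ext <;> simp [maxBasis]

/-- The matrix whose rows are the coordinates of the images of `u, v, u v`. -/
def DualNumber.rowMatrix (φ : k[ε][ε] ≃ₐ[k] k[ε][ε]) : Matrix (Fin 3) (Fin 3) k :=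
  Matrix.of fun i => maxCoord (φ (maxBasis i))

theorem DualNumber.map_maxBasis (φ : k[ε][ε] ≃ₐ[k] k[ε][ε]) (i : Fin 3) :
    φ (maxBasis i) = nilp (rowMatrix φ i 0) (rowMatrix φ i 1) (rowMatrix φ i 2) := by
  apply DualNumber.eq_nilp_of_mul_self
  rw [← map_mul, maxBasis_mul_self, map_zero]

theorem DualNumber.rowMatrix_mul (φ ψ : k[ε][ε] ≃ₐ[k] k[ε][ε]) :
    rowMatrix (φ * ψ) = rowMatrix ψ * rowMatrix φ := by
  ext i j
  have h : (φ * ψ) (maxBasis i) = φ (ψ (maxBasis i)) := rfl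
  rw [Matrix.mul_apply, Fin.sum_univ_three]
  change maxCoord ((φ * ψ) (maxBasis i)) j = _
  rw [h, map_maxBasis ψ, nilp_eq, map_add, map_add, map_smul, map_smul, map_smul,
    map_maxBasis φ, map_maxBasis φ, map_maxBasis φ]
  fin_cases j <;> simp [maxCoord]

theorem DualNumber.rowMatrix_one : rowMatrix (1 : k[ε][ε] ≃ₐ[k] k[ε][ε]) = 1 := by
  ext i j
  fin_cases i <;> fin_cases j <;> simp [rowMatrix, maxCoord, maxBasis]

/-- The representation `φ ↦ rowMatrix φ⁻¹` of the automorphism group of `k[ε][ε]`. -/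
def DualNumber.autRep : (k[ε][ε] ≃ₐ[k] k[ε][ε]) →* Matrix.GeneralLinearGroup (Fin 3) k :=
  MonoidHom.toHomUnits
    { toFun := fun φ => rowMatrix φ⁻¹
      map_one' := by rw [inv_one, rowMatrix_one]
      map_mul' := fun φ ψ => by rw [mul_inv_rev, rowMatrix_mul] }

theorem DualNumber.coe_autRep (φ : k[ε][ε] ≃ₐ[k] k[ε][ε]) :
    (autRep φ : Matrix (Fin 3) (Fin 3) k) = rowMatrix φ⁻¹ := rfl

theorem DualNumber.eq_add_nilp (x : k[ε][ε]) :
    x = algebraMap k _ x.fst.fst + nilp x.fst.snd x.snd.fst x.snd.snd := by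
  apply DualNumber.pair_ext <;> simp [TrivSqZeroExt.algebraMap_eq_inl']

theorem DualNumber.autRep_injective :
    Function.Injective (autRep : (k[ε][ε] ≃ₐ[k] k[ε][ε]) →* _) := by
  rw [injective_iff_map_eq_one]
  intro φ h
  have h₁ : rowMatrix φ⁻¹ = 1 := by rw [← coe_autRep, h, Units.val_one]
  rw [← inv_eq_one]
  ext1 x
  rw [eq_add_nilp x, map_add, AlgEquiv.commutes, nilp_eq, map_add, map_add, map_smul, map_smul,
    map_smul, map_maxBasis, map_maxBasis, map_maxBasis, h₁]
  apply DualNumber.pair_ext <;> simp [maxBasis]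

theorem DualNumber.rowMatrix_spec (h2 : (2 : k) ≠ 0) (φ : k[ε][ε] ≃ₐ[k] k[ε][ε]) :
    ∃ a b c d e f : k, a * d = 0 ∧ c * b = 0 ∧ a ^ 2 * b ^ 2 ≠ c ^ 2 * d ^ 2 ∧
      rowMatrix φ = !![a, d, e; c, b, f; 0, 0, a * b + c * d] := by
  have hsq (i : Fin 3) : rowMatrix φ i 0 * rowMatrix φ i 1 = 0 := by
    have h := congrArg (fun z : k[ε][ε] => z.snd.snd)
      (congrArg φ (maxBasis_mul_self (k := k) i))
    simp only [map_mul, map_maxBasis, nilp_mul_nilp, map_zero, nilp_snd_snd] at h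
    have h' : 2 * (rowMatrix φ i 0 * rowMatrix φ i 1) = 0 := by
      rw [TrivSqZeroExt.snd_zero, TrivSqZeroExt.snd_zero] at h
      linear_combination h
    exact (mul_eq_zero.mp h').resolve_left h2
  have huv : (maxBasis 2 : k[ε][ε]) = maxBasis 0 * maxBasis 1 := by
    simp [maxBasis, nilp_mul_nilp]
  have h := map_maxBasis φ 2
  rw [huv, map_mul, map_maxBasis, map_maxBasis, nilp_mul_nilp] at h
  have h20 := congrArg (fun z : k[ε][ε] => z.fst.snd) h
  have h21 := congrArg (fun z : k[ε][ε] => z.snd.fst) h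
  have h22 := congrArg (fun z : k[ε][ε] => z.snd.snd) h
  simp only [nilp_fst_snd, nilp_snd_fst, nilp_snd_snd] at h20 h21 h22
  have hM : rowMatrix φ = !![rowMatrix φ 0 0, rowMatrix φ 0 1, rowMatrix φ 0 2;
      rowMatrix φ 1 0, rowMatrix φ 1 1, rowMatrix φ 1 2;
      0, 0, rowMatrix φ 0 0 * rowMatrix φ 1 1 + rowMatrix φ 1 0 * rowMatrix φ 0 1] := by
    ext i j
    fin_cases i <;> fin_cases j <;> simp [← h20, ← h21, ← h22, mul_comm]
  refine ⟨_, _, _, _, _, _, hsq 0, hsq 1, fun heq => ?_, hM⟩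
  have hdet : (rowMatrix φ).det ≠ 0 := by
    have h1 : rowMatrix φ⁻¹ * rowMatrix φ = 1 := by
      rw [← rowMatrix_mul, mul_inv_cancel, rowMatrix_one]
    intro h0
    have := congrArg Matrix.det h1
    simp [h0] at this
  apply hdet
  rw [hM, Matrix.det_fin_three]
  simp
  linear_combination heq

theorem DualNumber.exists_rowMatrix_eq {a b c d e f : k} (had : a * d = 0) (hcb : c * b = 0)
    (hne : a ^ 2 * b ^ 2 ≠ c ^ 2 * d ^ 2) :
    ∃ φ : k[ε][ε] ≃ₐ[k] k[ε][ε], rowMatrix φ = !![a, d, e; c, b, f; 0, 0, a * b + c * d] := by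
  have hm : a * b - c * d ≠ 0 := fun h => hne (by linear_combination (a * b + c * d) * h)
  have hp : a * b + c * d ≠ 0 := fun h => hne (by linear_combination (a * b - c * d) * h)
  have hx : nilp a d e * nilp a d e = 0 := by
    rw [nilp_mul_nilp, mul_comm d a, had, add_zero]; rfl
  have hy : nilp c b f * nilp c b f = 0 := by
    rw [nilp_mul_nilp, mul_comm b c, hcb, add_zero]; rfl
  let ψ := liftPair (k := k) (nilp a d e) (nilp c b f) hx hy
  have hψ (z : k[ε][ε]) : ψ z = algebraMap k _ z.fst.fst +
      nilp (z.fst.snd * a + z.snd.fst * c) (z.fst.snd * d + z.snd.fst * b)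
        (z.fst.snd * e + z.snd.fst * f + z.snd.snd * (a * b + c * d)) := by
    rw [liftPair_apply, nilp_mul_nilp]
    apply DualNumber.pair_ext <;> simp [TrivSqZeroExt.algebraMap_eq_inl', mul_comm]
  have hbij : Function.Bijective ψ := by
    constructor
    · rw [injective_iff_map_eq_zero]
      intro z hz
      rw [hψ] at hz
      have h1 := congrArg (fun z : k[ε][ε] => z.fst.fst) hz
      have h2 := congrArg (fun z : k[ε][ε] => z.fst.snd) hz
      have h3 := congrArg (fun z : k[ε][ε] => z.snd.fst) hz
      have h4 := congrArg (fun z : k[ε][ε] => z.snd.snd) hz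
      simp [TrivSqZeroExt.algebraMap_eq_inl'] at h1 h2 h3 h4
      have h5 : z.fst.snd = 0 := (mul_eq_zero.mp
        (by linear_combination b * h2 - c * h3 :
          (a * b - c * d) * z.fst.snd = 0)).resolve_left hm
      have h6 : z.snd.fst = 0 := (mul_eq_zero.mp
        (by linear_combination a * h3 - d * h2 :
          (a * b - c * d) * z.snd.fst = 0)).resolve_left hm
      have h7 : z.snd.snd = 0 := by simpa [h5, h6, hp] using h4
      apply DualNumber.pair_ext <;> simp [h1, h5, h6, h7]
    · intro y
      obtain ⟨p, hp'⟩ : ∃ p, (a * b - c * d) * p = y.fst.snd * b - y.snd.fst * c :=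
        ⟨_, mul_div_cancel₀ _ hm⟩
      obtain ⟨q, hq'⟩ : ∃ q, (a * b - c * d) * q = a * y.snd.fst - d * y.fst.snd :=
        ⟨_, mul_div_cancel₀ _ hm⟩
      obtain ⟨r, hr'⟩ : ∃ r, (a * b + c * d) * r = y.snd.snd - p * e - q * f :=
        ⟨_, mul_div_cancel₀ _ hp⟩
      refine ⟨algebraMap k _ y.fst.fst + nilp p q r, ?_⟩
      rw [hψ]
      apply DualNumber.pair_ext <;> simp [TrivSqZeroExt.algebraMap_eq_inl']
      · apply mul_left_cancel₀ hm
        linear_combination a * hp' + c * hq'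
      · apply mul_left_cancel₀ hm
        linear_combination d * hp' + b * hq'
      · linear_combination hr'
  refine ⟨AlgEquiv.ofBijective ψ hbij, ?_⟩
  ext i j
  change maxCoord (ψ (maxBasis i)) j = _
  rw [hψ]
  fin_cases i <;> fin_cases j <;>
    simp [maxCoord, maxBasis, TrivSqZeroExt.algebraMap_eq_inl']

theorem DualNumber.mem_range_autRep_iff (h2 : (2 : k) ≠ 0)
    (M : Matrix.GeneralLinearGroup (Fin 3) k) :
    M ∈ (autRep (k := k)).range ↔ ∃ a b c d e f : k,
      a * d = 0 ∧ c * b = 0 ∧ a ^ 2 * b ^ 2 ≠ c ^ 2 * d ^ 2 ∧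
      (M : Matrix (Fin 3) (Fin 3) k) = !![a, d, e; c, b, f; 0, 0, a * b + c * d] := by
  constructor
  · rintro ⟨φ, rfl⟩
    exact rowMatrix_spec h2 φ⁻¹
  · rintro ⟨a, b, c, d, e, f, had, hcb, hne, hM⟩
    obtain ⟨φ, hφ⟩ := exists_rowMatrix_eq (e := e) (f := f) had hcb hne
    refine ⟨φ⁻¹, Units.ext ?_⟩
    rw [coe_autRep, inv_inv, hφ, hM]

variable (k) in
/-- The morphism from `k[u, v] / (u², v²)` to `k[ε][ε]` sending `u` to the inner `ε` and `v` to
the outer `ε`. -/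
noncomputable def DualNumber.quotHom :
    (MvPolynomial (Fin 2) k ⧸
      Ideal.span {(MvPolynomial.X 0 : MvPolynomial (Fin 2) k) ^ 2,
        (MvPolynomial.X 1 : MvPolynomial (Fin 2) k) ^ 2}) →ₐ[k] k[ε][ε] :=
  Ideal.Quotient.liftₐ _ (MvPolynomial.aeval ![(nilp 1 0 0 : k[ε][ε]), nilp 0 1 0]) (by
    change Ideal.span _ ≤ RingHom.ker _
    rw [Ideal.span_le]
    rintro _ (rfl | rfl) <;>
      simp [RingHom.mem_ker, pow_two, nilp_mul_nilp] <;> rfl)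

theorem DualNumber.quotHom_X (i : Fin 2) :
    quotHom k (Ideal.Quotient.mk _ (MvPolynomial.X i)) = ![nilp 1 0 0, nilp 0 1 0] i :=
  MvPolynomial.aeval_X _ i

variable (k) in
/-- The quotient `k[u, v] / (u², v²)` is `k[ε][ε]`. -/
noncomputable def DualNumber.quotEquiv :
    (MvPolynomial (Fin 2) k ⧸
      Ideal.span {(MvPolynomial.X 0 : MvPolynomial (Fin 2) k) ^ 2,
        (MvPolynomial.X 1 : MvPolynomial (Fin 2) k) ^ 2}) ≃ₐ[k] k[ε][ε] :=
  AlgEquiv.ofAlgHom (quotHom k)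
    (liftPair (Ideal.Quotient.mk _ (MvPolynomial.X 0)) (Ideal.Quotient.mk _ (MvPolynomial.X 1))
      (by
        rw [← map_mul, ← pow_two]
        exact Ideal.Quotient.eq_zero_iff_mem.mpr (Ideal.subset_span (by simp)))
      (by
        rw [← map_mul, ← pow_two]
        exact Ideal.Quotient.eq_zero_iff_mem.mpr (Ideal.subset_span (by simp))))
    (by
      refine AlgHom.ext fun z => ?_
      simp only [AlgHom.comp_apply, liftPair_apply, map_add, map_smul, map_mul, AlgHom.commutes,
        quotHom_X]
      apply DualNumber.pair_ext <;> simp [TrivSqZeroExt.algebraMap_eq_inl'])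
    (by
      apply Ideal.Quotient.algHom_ext
      apply MvPolynomial.algHom_ext
      intro i
      fin_cases i <;> simp [liftPair_apply, quotHom_X])

end IteratedDualNumbers

/-- For a field `k` of characteristic `≠ 2`, the set of `3×3` matrices
`[[a,d,e],[c,b,f],[0,0,ab+cd]]` with `ad = 0`, `cb = 0` and `a²b² ≠ c²d²` is a subgroup
of `GL₃(k)`, and the group of `k`-algebra automorphisms of `k[u,v]/(u², v²)` is
isomorphic to it. -/
theorem aut_kuv_quot_iso_subgroup (k : Type) [Field k] (hchar : ringChar k ≠ 2) :
    ∃ G : Subgroup (Matrix.GeneralLinearGroup (Fin 3) k),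
      (∀ M : Matrix.GeneralLinearGroup (Fin 3) k, M ∈ G ↔ ∃ a b c d e f : k,
        a * d = 0 ∧ c * b = 0 ∧ a ^ 2 * b ^ 2 ≠ c ^ 2 * d ^ 2 ∧
        (M : Matrix (Fin 3) (Fin 3) k) = !![a, d, e; c, b, f; 0, 0, a * b + c * d]) ∧
      Nonempty (((MvPolynomial (Fin 2) k ⧸
          Ideal.span {(MvPolynomial.X 0 : MvPolynomial (Fin 2) k) ^ 2,
            (MvPolynomial.X 1 : MvPolynomial (Fin 2) k) ^ 2}) ≃ₐ[k]
        (MvPolynomial (Fin 2) k ⧸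
          Ideal.span {(MvPolynomial.X 0 : MvPolynomial (Fin 2) k) ^ 2,
            (MvPolynomial.X 1 : MvPolynomial (Fin 2) k) ^ 2})) ≃* G) := by
  have h2 : (2 : k) ≠ 0 := Ring.two_ne_zero hchar
  exact ⟨DualNumber.autRep.range, DualNumber.mem_range_autRep_iff h2,
    ⟨(DualNumber.quotEquiv k).autCongr.trans
      (MonoidHom.ofInjective DualNumber.autRep_injective)⟩⟩
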